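/- arXiv:2004.07593 — 2 statements merged into one kernel-verified Lean document; each statement's English description precedes it below -/
import Mathlib

section
/- (Infinitesimal generator of the stable semigroup, α ∈ (0,1).) Let α ∈ (0,1), m₁, m₂ ∈ [0,∞) with m₁ + m₂ > 0, β ∈ ℝ, and let f be a complex-valued Schwartz function on ℝ. Then for every x ∈ ℝ, lim_{t→0⁺} (P_t f(x) - f(x))/t = -x f'(x) + Γ_α f'(x) + m₁ ∫₀^∞ f'(x+u) u^{-α} du - m₂ ∫₀^∞ f'(x-u) u^{-α} du, where both integrals converge absolutely (their sum equals ∫_ℝ f'(x+u) u ν_α(du)). -/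
open MeasureTheory

/-- The α-stable Lévy measure on ℝ with density
`u ↦ m₁ u^(-α-1) 1_{(0,∞)}(u) + m₂ |u|^(-α-1) 1_{(-∞,0)}(u)` w.r.t. Lebesgue measure. -/
noncomputable def nuStable (α m₁ m₂ : ℝ) : Measure ℝ :=
  (volume : Measure ℝ).withDensity fun u =>
    ENNReal.ofReal (if 0 < u then m₁ * u ^ (-α - 1) else if u < 0 then m₂ * |u| ^ (-α - 1) else 0)

/-- Location parameter `Γ_α = β - (m₁ - m₂) ∫₀^∞ u^{-α}(1+u²)^{-1} du` for `α ∈ (0,1)`. -/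
noncomputable def Gamma01 (α m₁ m₂ β : ℝ) : ℝ :=
  β - (m₁ - m₂) * ∫ u in Set.Ioi (0 : ℝ), u ^ (-α) / (1 + u ^ 2)

/-- Characteristic function of the `α`-stable law, `α ∈ (0,1)`:
`ψ_α(t) = exp(itΓ_α + ∫_ℝ (e^{itu} - 1) ν_α(du))`. -/
noncomputable def psi01 (α m₁ m₂ β : ℝ) (t : ℝ) : ℂ :=
  Complex.exp (Complex.I * t * (Gamma01 α m₁ m₂ β) +
    ∫ u : ℝ, (Complex.exp (Complex.I * t * u) - 1) ∂(nuStable α m₁ m₂))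

/-- Fourier transform `f̂(ξ) = ∫_ℝ f(x) e^{-ixξ} dx`. -/
noncomputable def fourierT (g : ℝ → ℂ) (ξ : ℝ) : ℂ :=
  ∫ x : ℝ, g x * Complex.exp (-(Complex.I * x * ξ))

/-- The stable Fourier-multiplier family
`P_t f(x) = (1/2π) ∫_ℝ f̂(ξ) e^{iξx e^{-t}} ψ_α(ξ)/ψ_α(e^{-t}ξ) dξ`. -/
noncomputable def Pt (α m₁ m₂ β : ℝ) (t : ℝ) (g : ℝ → ℂ) (x : ℝ) : ℂ :=
  ((1 / (2 * Real.pi) : ℝ) : ℂ) *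
    ∫ ξ : ℝ, fourierT g ξ * Complex.exp (Complex.I * ξ * x * ((Real.exp (-t) : ℝ) : ℂ)) *
      psi01 α m₁ m₂ β ξ / psi01 α m₁ m₂ β (Real.exp (-t) * ξ)

/-!
Let `L` be the Lévy exponent of `ν_α`. Substituting `u ↦ cu` shows that `L` is homogeneous of degree
`α` under positive dilations, so `e^{iξxe^{-t}} ψ(ξ)/ψ(e^{-t}ξ)` is the exponential of
`iξ(e^{-t}x + (1 - e^{-t})Γ) + (1 - e^{-αt})L(ξ)`, whose real part is nonpositive. Since
`|L(ξ)| ≤ C(2 + |ξ|)`, dominated convergence allows the Fourier integral defining `P_t f(x)` to be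
differentiated at `t = 0`, and Fourier inversion gives
`(Γ - x) f'(x) + α ∫ (f(x+u) - f(x)) ν_α(du)`: the `L`-term becomes the jump integral by Fubini's
theorem. An integration by parts on each half-line turns the increments of `f` against `α u^{-α-1}`
into the derivative of `f` against `u^{-α}`.
-/

open Set Filter Topology

theorem norm_cexp_I_mul_mul (ξ y : ℝ) : ‖Complex.exp (Complex.I * ξ * y)‖ = 1 := by
  rw [mul_assoc, ← Complex.ofReal_mul, Complex.norm_exp_I_mul_ofReal]

theorem norm_cexp_I_mul_mul_sub_one_le (ξ u : ℝ) :
    ‖Complex.exp (Complex.I * ξ * u) - 1‖ ≤ (2 + |ξ|) * min 1 |u| := by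
  rcases le_total 1 |u| with hu | hu
  · have : ‖Complex.exp (Complex.I * ξ * u) - 1‖ ≤ 1 + 1 := by
      simpa only [norm_cexp_I_mul_mul, norm_one] using
        norm_sub_le (Complex.exp (Complex.I * ξ * u)) 1
    rw [min_eq_left hu]
    linarith [abs_nonneg ξ]
  · have : ‖Complex.exp (Complex.I * ξ * u) - 1‖ ≤ |ξ| * |u| := by
      simpa only [Complex.ofReal_mul, ← mul_assoc, norm_mul, Real.norm_eq_abs] using
        Real.norm_exp_I_mul_ofReal_sub_one_le (x := ξ * u)
    rw [min_eq_right hu]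
    linarith [abs_nonneg u]

theorem norm_cexp_sub_cexp_le_of_re_nonpos {z w : ℂ} (hz : z.re ≤ 0) (hw : w.re ≤ 0) :
    ‖Complex.exp z - Complex.exp w‖ ≤ ‖z - w‖ := by
  simpa only [one_mul] using Convex.norm_image_sub_le_of_norm_hasDerivWithin_le (C := 1)
    (fun v _ => (Complex.hasDerivAt_exp v).hasDerivWithinAt)
    (fun v hv => by simpa only [Complex.norm_exp, Real.exp_le_one_iff] using! hv)
    (convex_halfSpace_re_le 0) hw hz

theorem hasDerivWithinAt_integral_mul_cexp {X : Type*} [MeasurableSpace X] {μ : Measure X}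
    {G : X → ℂ} {Z : ℝ → X → ℂ} {Z' : X → ℂ} {B : X → ℝ} (hG : Integrable G μ)
    (hBG : Integrable (fun p => B p * ‖G p‖) μ)
    (hZ_meas : ∀ t, 0 ≤ t → AEStronglyMeasurable (Z t) μ)
    (hZ_re : ∀ t, 0 ≤ t → ∀ p, (Z t p).re ≤ 0)
    (hZ_lip : ∀ t, 0 ≤ t → ∀ p, ‖Z t p - Z 0 p‖ ≤ t * B p)
    (hZ' : ∀ p, HasDerivWithinAt (fun t => Z t p) (Z' p) (Ioi 0) 0) :
    HasDerivWithinAt (fun t => ∫ p, G p * Complex.exp (Z t p) ∂μ)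
      (∫ p, G p * (Complex.exp (Z 0 p) * Z' p) ∂μ) (Ioi 0) 0 := by
  have hexp_meas : ∀ t, 0 ≤ t → AEStronglyMeasurable (fun p => Complex.exp (Z t p)) μ :=
    fun t ht => Complex.continuous_exp.comp_aestronglyMeasurable (hZ_meas t ht)
  have hexp_int : ∀ t, 0 ≤ t → Integrable (fun p => G p * Complex.exp (Z t p)) μ :=
    fun t ht => hG.mul_bdd (c := 1) (hexp_meas t ht) <| .of_forall fun p => by
      simpa only [Complex.norm_exp, Real.exp_le_one_iff] using hZ_re t ht p
  have hslope : ∀ t ∈ Ioi (0 : ℝ),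
      ∫ p, G p * slope (fun s => Complex.exp (Z s p)) 0 t ∂μ =
        slope (fun s => ∫ p, G p * Complex.exp (Z s p) ∂μ) 0 t := fun t ht => by
    simp only [slope_def_module, mul_smul_comm, integral_smul, mul_sub]
    rw [integral_sub (hexp_int t (le_of_lt ht)) (hexp_int 0 le_rfl)]
  rw [hasDerivWithinAt_iff_tendsto_slope' self_notMem_Ioi]
  refine Tendsto.congr' (eventually_mem_nhdsWithin.mono hslope) ?_
  refine tendsto_integral_filter_of_dominated_convergence _ ?_ ?_ hBG ?_
  · filter_upwards [self_mem_nhdsWithin] with t ht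
    exact hG.aestronglyMeasurable.mul
      (((hexp_meas t (le_of_lt ht)).sub (hexp_meas 0 le_rfl)).const_smul _)
  · filter_upwards [self_mem_nhdsWithin] with t (ht : 0 < t)
    refine .of_forall fun p => ?_
    rw [norm_mul, mul_comm (B p), slope_def_module, sub_zero, norm_smul, norm_inv,
      Real.norm_of_nonneg ht.le]
    gcongr
    rw [inv_mul_le_iff₀ ht]
    exact (norm_cexp_sub_cexp_le_of_re_nonpos (hZ_re t ht.le p) (hZ_re 0 le_rfl p)).trans
      (hZ_lip t ht.le p)
  · exact .of_forall fun p => Tendsto.const_mul _ <|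
      (hasDerivWithinAt_iff_tendsto_slope' self_notMem_Ioi).1 (hZ' p).cexp

/-- The inverse Fourier transform `x ↦ (2π)⁻¹ ∫ G(ξ) e^{iξx} dξ` in the normalisation of
`fourierT`. -/
noncomputable def invFourierT (G : ℝ → ℂ) (x : ℝ) : ℂ :=
  ((1 / (2 * Real.pi) : ℝ) : ℂ) * ∫ ξ : ℝ, G ξ * Complex.exp (Complex.I * ξ * x)

section FourierInversion

open scoped FourierTransform

theorem fourierT_eq_fourier (f : ℝ → ℂ) (ξ : ℝ) : fourierT f ξ = 𝓕 f (ξ / (2 * Real.pi)) := by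
  have hπ : (Real.pi : ℂ) ≠ 0 := by exact_mod_cast Real.pi_ne_zero
  rw [Real.fourier_real_eq_integral_exp_smul, fourierT]
  congr with v
  rw [smul_eq_mul, mul_comm]
  push_cast
  field_simp

theorem invFourierT_eq_fourier (G : ℝ → ℂ) (x : ℝ) :
    invFourierT G x = ((1 / (2 * Real.pi) : ℝ) : ℂ) * 𝓕 G (-x / (2 * Real.pi)) := by
  rw [← fourierT_eq_fourier, fourierT, invFourierT]
  congr with ξ
  push_cast
  ring_nf

theorem continuous_fourierT {f : ℝ → ℂ} (hf : Integrable f) : Continuous (fourierT f) := by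
  rw [funext (fourierT_eq_fourier f)]
  exact (VectorFourier.fourierIntegral_continuous Real.continuous_fourierChar
    continuous_inner hf).comp (continuous_id.div_const _)

theorem integrable_fourier_of_integrable_fourierT {f : ℝ → ℂ} (hF : Integrable (fourierT f)) :
    Integrable (𝓕 f) := by
  have hπ : 2 * Real.pi ≠ 0 := by positivity
  rw [← integrable_comp_div_iff _ hπ]
  exact hF.congr (.of_forall (fourierT_eq_fourier f))

theorem invFourierT_fourierT {f : ℝ → ℂ} (hf : Continuous f) (hfi : Integrable f)
    (hF : Integrable (fourierT f)) : invFourierT (fourierT f) = f := by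
  have hπ : 0 < 2 * Real.pi := by positivity
  ext x
  have hinv : 𝓕⁻ (𝓕 f) x = f x := by
    rw [hf.fourierInv_fourier_eq hfi (integrable_fourier_of_integrable_fourierT hF)]
  have hscale := Measure.integral_comp_div
    (fun v : ℝ => 𝓕 f v * Complex.exp (Complex.I * (2 * Real.pi * v : ℝ) * x)) (2 * Real.pi)
  simp only [mul_div_cancel₀ _ hπ.ne', ← fourierT_eq_fourier] at hscale
  rw [invFourierT, hscale, abs_of_pos hπ, Complex.real_smul, ← mul_assoc, ← Complex.ofReal_mul,
    one_div, inv_mul_cancel₀ hπ.ne', Complex.ofReal_one, one_mul, ← hinv, Real.fourierInv_eq']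
  congr with v
  rw [smul_eq_mul, mul_comm, RCLike.inner_apply, conj_trivial]
  push_cast
  ring_nf

theorem norm_invFourierT_le (G : ℝ → ℂ) (x : ℝ) :
    ‖invFourierT G x‖ ≤ 1 / (2 * Real.pi) * ∫ ξ, ‖G ξ‖ := by
  have hπ : 0 ≤ 1 / (2 * Real.pi) := by positivity
  rw [invFourierT, norm_mul, Complex.norm_real, Real.norm_of_nonneg hπ]
  gcongr
  refine (norm_integral_le_integral_norm _).trans_eq ?_
  simp only [norm_mul, norm_cexp_I_mul_mul, mul_one]

theorem hasDerivAt_invFourierT {G : ℝ → ℂ} (hG : Integrable G)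
    (hG' : Integrable fun ξ : ℝ => ξ * G ξ) (x : ℝ) :
    HasDerivAt (invFourierT G) (invFourierT (fun ξ => Complex.I * ξ * G ξ) x) x := by
  have hπ : (Real.pi : ℂ) ≠ 0 := by exact_mod_cast Real.pi_ne_zero
  have hderiv := ((Real.hasDerivAt_fourier hG hG' (-x / (2 * Real.pi))).scomp x
    ((hasDerivAt_neg x).div_const (2 * Real.pi))).const_mul ((1 / (2 * Real.pi) : ℝ) : ℂ)
  rw [funext (invFourierT_eq_fourier G)]
  refine hderiv.congr_deriv ?_
  rw [invFourierT_eq_fourier, Complex.real_smul]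
  simp only [Real.fourier_real_eq_integral_exp_smul, smul_eq_mul, ← integral_const_mul]
  congr with ξ
  push_cast
  field_simp

end FourierInversion

theorem integrable_of_integrable_mul {G : ℝ → ℂ} (hG : Continuous G)
    (hG' : Integrable fun ξ : ℝ => ξ * G ξ) : Integrable G := by
  rw [← integrableOn_univ, ← union_compl_self (Icc (-1 : ℝ) 1)]
  refine hG.integrableOn_Icc.union (Integrable.mono hG'.integrableOn hG.aestronglyMeasurable ?_)
  filter_upwards [ae_restrict_mem measurableSet_Icc.compl] with ξ hξ
  rw [mem_compl_iff, mem_Icc, ← abs_le, not_le] at hξ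
  rw [norm_mul, Complex.norm_real, Real.norm_eq_abs]
  exact le_mul_of_one_le_left (norm_nonneg _) hξ.le

theorem integrable_mul_cexp {G : ℝ → ℂ} (hG : Integrable G) (x : ℝ) :
    Integrable fun ξ : ℝ => G ξ * Complex.exp (Complex.I * ξ * x) :=
  hG.mul_bdd (c := 1) (by fun_prop) (.of_forall fun ξ => (norm_cexp_I_mul_mul ξ x).le)

theorem invFourierT_add {G H : ℝ → ℂ} (hG : Integrable G) (hH : Integrable H) (x : ℝ) :
    invFourierT (fun ξ => G ξ + H ξ) x = invFourierT G x + invFourierT H x := by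
  simp only [invFourierT, add_mul]
  rw [integral_add (integrable_mul_cexp hG x) (integrable_mul_cexp hH x), mul_add]

theorem invFourierT_const_mul (c : ℂ) (G : ℝ → ℂ) (x : ℝ) :
    invFourierT (fun ξ => c * G ξ) x = c * invFourierT G x := by
  simp only [invFourierT, mul_assoc c, integral_const_mul]
  ring

theorem invFourierT_add_sub {G : ℝ → ℂ} (hG : Integrable G) (x u : ℝ) :
    invFourierT G (x + u) - invFourierT G x =
      invFourierT (fun ξ => G ξ * (Complex.exp (Complex.I * ξ * u) - 1)) x := by
  simp only [invFourierT]
  rw [← mul_sub, ← integral_sub (integrable_mul_cexp hG _) (integrable_mul_cexp hG _)]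
  congr with ξ
  rw [Complex.ofReal_add, mul_add, Complex.exp_add]
  ring

/-- The characteristic exponent `L(ξ) = ∫ (e^{iξu} - 1) ν(du)` of a driftless pure-jump Lévy process
of finite variation; finite variation is the condition `Integrable (fun u => min 1 |u|) ν`. -/
noncomputable def levyExponent (ν : Measure ℝ) (ξ : ℝ) : ℂ :=
  ∫ u : ℝ, (Complex.exp (Complex.I * ξ * u) - 1) ∂ν

section LevyExponent

variable {ν : Measure ℝ}

theorem integrable_cexp_sub_one (hν : Integrable (fun u => min 1 |u|) ν) (ξ : ℝ) :
    Integrable (fun u : ℝ => Complex.exp (Complex.I * ξ * u) - 1) ν :=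
  (hν.const_mul (2 + |ξ|)).mono' (by fun_prop) (.of_forall (norm_cexp_I_mul_mul_sub_one_le ξ))

theorem measurable_levyExponent [SFinite ν] : Measurable (levyExponent ν) := by
  have : Measurable fun p : ℝ × ℝ => Complex.exp (Complex.I * p.1 * p.2) - 1 := by fun_prop
  exact this.stronglyMeasurable.integral_prod_right'.measurable

theorem levyExponent_re_nonpos (hν : Integrable (fun u => min 1 |u|) ν) (ξ : ℝ) :
    (levyExponent ν ξ).re ≤ 0 := by
  rw [levyExponent, ← RCLike.re_eq_complex_re, ← integral_re (integrable_cexp_sub_one hν ξ)]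
  refine integral_nonpos fun u => ?_
  have := Complex.re_le_norm (Complex.exp (Complex.I * ξ * u))
  rw [norm_cexp_I_mul_mul] at this
  simpa only [RCLike.re_eq_complex_re, Complex.sub_re, Complex.one_re, Pi.zero_apply, sub_nonpos]

theorem norm_levyExponent_le (hν : Integrable (fun u => min 1 |u|) ν) (ξ : ℝ) :
    ‖levyExponent ν ξ‖ ≤ (2 + |ξ|) * ∫ u, min 1 |u| ∂ν := by
  rw [← integral_const_mul]
  exact norm_integral_le_of_norm_le (hν.const_mul _)
    (.of_forall (norm_cexp_I_mul_mul_sub_one_le ξ))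

variable {G : ℝ → ℂ}

theorem integrable_two_add_abs_mul_norm (hG : Integrable G)
    (hG' : Integrable fun ξ : ℝ => ξ * G ξ) : Integrable fun ξ : ℝ => (2 + |ξ|) * ‖G ξ‖ := by
  simpa only [add_mul, norm_mul, Complex.norm_real, Real.norm_eq_abs] using!
    (hG.norm.const_mul 2).add hG'.norm

theorem integrable_mul_levyExponent [SFinite ν] (hν : Integrable (fun u => min 1 |u|) ν)
    (hG : Integrable G) (hG' : Integrable fun ξ : ℝ => ξ * G ξ) :
    Integrable fun ξ => G ξ * levyExponent ν ξ := by
  refine ((integrable_two_add_abs_mul_norm hG hG').mul_const (∫ u, min 1 |u| ∂ν)).mono'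
    (hG.aestronglyMeasurable.mul measurable_levyExponent.aestronglyMeasurable)
    (.of_forall fun ξ => ?_)
  rw [norm_mul, mul_comm (2 + |ξ|), mul_assoc]
  gcongr
  exact norm_levyExponent_le hν ξ

theorem invFourierT_mul_levyExponent [SFinite ν] (hν : Integrable (fun u => min 1 |u|) ν)
    (hG : Integrable G) (hG' : Integrable fun ξ : ℝ => ξ * G ξ) (x : ℝ) :
    invFourierT (fun ξ => G ξ * levyExponent ν ξ) x =
      ∫ u, (invFourierT G (x + u) - invFourierT G x) ∂ν := by
  have hint : Integrable (Function.uncurry fun ξ u : ℝ =>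
      G ξ * (Complex.exp (Complex.I * ξ * u) - 1) * Complex.exp (Complex.I * ξ * x))
      (volume.prod ν) := by
    refine ((integrable_two_add_abs_mul_norm hG hG').mul_prod hν).mono'
      ((hG.aestronglyMeasurable.comp_fst.mul (by fun_prop)).mul (by fun_prop))
      (.of_forall fun ⟨ξ, u⟩ => ?_)
    rw [Function.uncurry_apply_pair, norm_mul, norm_mul, norm_cexp_I_mul_mul, mul_one]
    calc ‖G ξ‖ * ‖Complex.exp (Complex.I * ξ * u) - 1‖
        ≤ ‖G ξ‖ * ((2 + |ξ|) * min 1 |u|) := by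
          gcongr
          exact norm_cexp_I_mul_mul_sub_one_le ξ u
      _ = (2 + |ξ|) * ‖G ξ‖ * min 1 |u| := by ring
  simp_rw [invFourierT_add_sub hG]
  simp only [invFourierT, levyExponent]
  rw [integral_const_mul, ← integral_integral_swap hint]
  simp only [integral_mul_const, integral_const_mul]

end LevyExponent

theorem map_neg_withDensity {μ : Measure ℝ} [μ.IsNegInvariant] {g : ℝ → ENNReal}
    (hg : Measurable g) :
    (μ.withDensity g).map Neg.neg = μ.withDensity fun u => g (-u) := by
  ext s hs
  have hs' : MeasurableSet (Neg.neg ⁻¹' s) := measurable_neg hs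
  rw [Measure.map_apply measurable_neg hs, withDensity_apply _ hs', withDensity_apply _ hs,
    ← (Measure.measurePreserving_neg μ).setLIntegral_comp_preimage hs (by fun_prop)]
  simp only [neg_neg]

/-- The one-sided stable Lévy measure `1_{(0,∞)}(u) u^{-α-1} du`, the building block of
`nuStable`. -/
noncomputable def oneSidedStable (α : ℝ) : Measure ℝ :=
  (volume.restrict (Ioi 0)).withDensity fun u => ENNReal.ofReal (u ^ (-α - 1))

section Stable

variable {α m₁ m₂ : ℝ}

instance (α m₁ m₂ : ℝ) : SFinite (nuStable α m₁ m₂) := by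
  unfold nuStable
  infer_instance

theorem integrable_oneSidedStable_iff {E : Type*} [NormedAddCommGroup E] [NormedSpace ℝ E]
    {h : ℝ → E} :
    Integrable h (oneSidedStable α) ↔ IntegrableOn (fun u => u ^ (-α - 1) • h u) (Ioi 0) := by
  rw [oneSidedStable, integrable_withDensity_iff_integrable_smul' (by fun_prop) (by simp)]
  refine integrableOn_congr_fun (fun u hu => ?_) measurableSet_Ioi
  rw [ENNReal.toReal_ofReal (Real.rpow_nonneg (le_of_lt hu) _)]

theorem integral_oneSidedStable {E : Type*} [NormedAddCommGroup E] [NormedSpace ℝ E]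
    (h : ℝ → E) : ∫ u, h u ∂oneSidedStable α = ∫ u in Ioi 0, u ^ (-α - 1) • h u := by
  rw [oneSidedStable, integral_withDensity_eq_integral_toReal_smul (by fun_prop) (by simp)]
  refine setIntegral_congr_fun measurableSet_Ioi fun u hu => ?_
  rw [ENNReal.toReal_ofReal (Real.rpow_nonneg (le_of_lt hu) _)]

theorem integral_oneSidedStable_comp_mul {E : Type*} [NormedAddCommGroup E] [NormedSpace ℝ E]
    (h : ℝ → E) {c : ℝ} (hc : 0 < c) :
    ∫ u, h (c * u) ∂oneSidedStable α = c ^ α • ∫ u, h u ∂oneSidedStable α := by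
  have hpow : ∀ u ∈ Ioi (0 : ℝ), u ^ (-α - 1) = c ^ α * c * (c * u) ^ (-α - 1) := by
    intro u (hu : 0 < u)
    rw [Real.mul_rpow hc.le hu.le, Real.rpow_sub_one hc.ne', Real.rpow_neg hc.le]
    field_simp
  calc ∫ u, h (c * u) ∂oneSidedStable α
      = ∫ u in Ioi 0, (c ^ α * c) • ((c * u) ^ (-α - 1) • h (c * u)) := by
        rw [integral_oneSidedStable]
        refine setIntegral_congr_fun measurableSet_Ioi fun u hu => ?_
        simp only [hpow u hu, mul_smul]
    _ = c ^ α • ∫ u, h u ∂oneSidedStable α := by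
        rw [integral_smul, integral_comp_mul_left_Ioi (fun u => u ^ (-α - 1) • h u) 0 hc, mul_zero,
          ← integral_oneSidedStable, smul_smul, mul_inv_cancel_right₀ hc.ne']

theorem integrableOn_rpow_neg_Ioc (hα1 : α < 1) : IntegrableOn (fun u : ℝ => u ^ (-α)) (Ioc 0 1) :=
  (intervalIntegrable_iff_integrableOn_Ioc_of_le zero_le_one).1
    (intervalIntegral.intervalIntegrable_rpow' (by linarith))

theorem integrable_min_one_abs_oneSidedStable (hα : 0 < α) (hα1 : α < 1) :
    Integrable (fun u => min 1 |u|) (oneSidedStable α) := by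
  rw [integrable_oneSidedStable_iff, ← Ioc_union_Ioi_eq_Ioi zero_le_one]
  refine IntegrableOn.union ?_ ?_
  · refine (integrableOn_rpow_neg_Ioc hα1).congr_fun (fun u hu => ?_) measurableSet_Ioc
    have hu0 : 0 < u := hu.1
    simp only [abs_of_pos hu0, min_eq_right hu.2, smul_eq_mul, Real.rpow_sub_one hu0.ne']
    field_simp
  · refine (integrableOn_Ioi_rpow_of_lt (by linarith : -α - 1 < -1) one_pos).congr_fun
      (fun u (hu : 1 < u) => ?_) measurableSet_Ioi
    simp only [min_eq_left (hu.le.trans (le_abs_self u)), smul_eq_mul, mul_one]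

theorem nuStable_eq : nuStable α m₁ m₂ = ENNReal.ofReal m₁ • oneSidedStable α +
    ENNReal.ofReal m₂ • (oneSidedStable α).map Neg.neg := by
  have hpow : Measurable fun u : ℝ => ENNReal.ofReal (u ^ (-α - 1)) := by fun_prop
  have hpos := hpow.indicator (measurableSet_Ioi (a := (0 : ℝ)))
  rw [oneSidedStable, ← withDensity_indicator measurableSet_Ioi, map_neg_withDensity hpos,
    ← withDensity_smul _ hpos, ← withDensity_smul _ (by fun_prop),
    ← withDensity_add_left (hpos.const_smul _), nuStable]
  congr with u
  rcases lt_trichotomy u 0 with hu | rfl | hu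
  · simp [hu, hu.le, hu.not_gt, abs_of_neg, ENNReal.ofReal_mul', Real.rpow_nonneg]
  · simp
  · simp [hu, hu.le, ENNReal.ofReal_mul', Real.rpow_nonneg]

theorem integral_nuStable (hm₁ : 0 ≤ m₁) (hm₂ : 0 ≤ m₂) {h : ℝ → ℂ}
    (hpos : Integrable h (oneSidedStable α))
    (hneg : Integrable (fun u => h (-u)) (oneSidedStable α)) :
    ∫ u, h u ∂nuStable α m₁ m₂ =
      m₁ * ∫ u, h u ∂oneSidedStable α + m₂ * ∫ u, h (-u) ∂oneSidedStable α := by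
  have hemb : MeasurableEmbedding (Neg.neg : ℝ → ℝ) := (MeasurableEquiv.neg ℝ).measurableEmbedding
  rw [nuStable_eq, integral_add_measure (hpos.smul_measure ENNReal.ofReal_ne_top)
    ((hemb.integrable_map_iff.2 hneg).smul_measure ENNReal.ofReal_ne_top), integral_smul_measure,
    integral_smul_measure, hemb.integral_map, ENNReal.toReal_ofReal hm₁,
    ENNReal.toReal_ofReal hm₂, Complex.real_smul, Complex.real_smul]

theorem integrable_min_one_abs_nuStable (hα : 0 < α) (hα1 : α < 1) :
    Integrable (fun u => min 1 |u|) (nuStable α m₁ m₂) := by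
  have hmin := integrable_min_one_abs_oneSidedStable hα hα1
  have hemb : MeasurableEmbedding (Neg.neg : ℝ → ℝ) := (MeasurableEquiv.neg ℝ).measurableEmbedding
  rw [nuStable_eq]
  refine (hmin.smul_measure ENNReal.ofReal_ne_top).add_measure
    (Integrable.smul_measure (hemb.integrable_map_iff.2 ?_) ENNReal.ofReal_ne_top)
  simpa only [Function.comp_def, abs_neg] using hmin

theorem levyExponent_oneSidedStable_mul {c : ℝ} (hc : 0 < c) (ξ : ℝ) :
    levyExponent (oneSidedStable α) (c * ξ) =
      ((c ^ α : ℝ) : ℂ) * levyExponent (oneSidedStable α) ξ := by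
  rw [levyExponent, levyExponent, ← Complex.real_smul, ← integral_oneSidedStable_comp_mul _ hc]
  congr with u
  push_cast
  ring_nf

theorem levyExponent_nuStable (hα : 0 < α) (hα1 : α < 1) (hm₁ : 0 ≤ m₁) (hm₂ : 0 ≤ m₂) (ξ : ℝ) :
    levyExponent (nuStable α m₁ m₂) ξ =
      m₁ * levyExponent (oneSidedStable α) ξ + m₂ * levyExponent (oneSidedStable α) (-ξ) := by
  have hint := integrable_cexp_sub_one (integrable_min_one_abs_oneSidedStable hα hα1)
  have hneg : ∀ u : ℝ, Complex.exp (Complex.I * ξ * ((-u : ℝ) : ℂ)) - 1 =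
      Complex.exp (Complex.I * ((-ξ : ℝ) : ℂ) * u) - 1 := fun u => by
    push_cast
    ring_nf
  rw [levyExponent, integral_nuStable hm₁ hm₂ (hint ξ) ((hint (-ξ)).congr <| .of_forall fun u =>
    (hneg u).symm)]
  simp only [hneg, levyExponent]

theorem levyExponent_nuStable_mul (hα : 0 < α) (hα1 : α < 1) (hm₁ : 0 ≤ m₁) (hm₂ : 0 ≤ m₂)
    {c : ℝ} (hc : 0 < c) (ξ : ℝ) :
    levyExponent (nuStable α m₁ m₂) (c * ξ) =
      ((c ^ α : ℝ) : ℂ) * levyExponent (nuStable α m₁ m₂) ξ := by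
  rw [levyExponent_nuStable hα hα1 hm₁ hm₂, levyExponent_nuStable hα hα1 hm₁ hm₂, ← mul_neg,
    levyExponent_oneSidedStable_mul hc, levyExponent_oneSidedStable_mul hc]
  ring

section IntegrationByParts

variable {C : ℝ}

theorem norm_sub_le_mul_min_one_abs {E : Type*} [NormedAddCommGroup E] [NormedSpace ℝ E]
    [CompleteSpace E] {g g' : ℝ → E} (hg : ∀ u, HasDerivAt g (g' u) u)
    (hC : ∀ u, ‖g' u‖ ≤ C) (hg' : Integrable g') (u : ℝ) :
    ‖g u - g 0‖ ≤ (C + ∫ v, ‖g' v‖) * min 1 |u| := by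
  have hC0 : 0 ≤ C := (norm_nonneg _).trans (hC 0)
  have hI0 : 0 ≤ ∫ v, ‖g' v‖ := integral_nonneg fun v => norm_nonneg _
  rcases le_total 1 |u| with hu | hu
  · have hint : ‖g u - g 0‖ ≤ ∫ v, ‖g' v‖ := by
      rw [← intervalIntegral.integral_eq_sub_of_hasDerivAt (fun v _ => hg v)
        hg'.intervalIntegrable]
      exact intervalIntegral.norm_integral_le_integral_norm_uIoc.trans
        (setIntegral_le_integral hg'.norm (.of_forall fun v => norm_nonneg _))
    rw [min_eq_left hu]
    linarith
  · have hlip : ‖g u - g 0‖ ≤ C * |u| := by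
      simpa only [sub_zero, Real.norm_eq_abs] using
        Convex.norm_image_sub_le_of_norm_hasDerivWithin_le (fun v _ => (hg v).hasDerivWithinAt)
          (fun v _ => hC v) convex_univ (mem_univ 0) (mem_univ u)
    rw [min_eq_right hu]
    linarith [mul_nonneg hI0 (abs_nonneg u)]

theorem integrableOn_mul_rpow_neg (hα : 0 < α) (hα1 : α < 1) {h : ℝ → ℂ} (hC : ∀ u, ‖h u‖ ≤ C)
    (hh : Integrable h) : IntegrableOn (fun u : ℝ => h u * ((u ^ (-α) : ℝ) : ℂ)) (Ioi 0) := by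
  rw [← Ioc_union_Ioi_eq_Ioi zero_le_one]
  refine IntegrableOn.union ?_ ?_
  · exact (integrableOn_rpow_neg_Ioc hα1).ofReal.bdd_mul hh.aestronglyMeasurable.restrict
      (.of_forall hC)
  · refine hh.integrableOn.mul_bdd (c := 1) (by fun_prop) ?_
    filter_upwards [ae_restrict_mem measurableSet_Ioi] with u (hu : 1 < u)
    rw [Complex.norm_real, Real.norm_of_nonneg (Real.rpow_nonneg (zero_le_one.trans hu.le) _)]
    exact Real.rpow_le_one_of_one_le_of_nonpos hu.le (by linarith)

variable {g g' : ℝ → ℂ}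

theorem integrable_sub_oneSidedStable (hα : 0 < α) (hα1 : α < 1)
    (hg : ∀ u, HasDerivAt g (g' u) u) (hC : ∀ u, ‖g' u‖ ≤ C) (hg' : Integrable g') :
    Integrable (fun u => g u - g 0) (oneSidedStable α) := by
  have hcont : Continuous g := continuous_iff_continuousAt.2 fun u => (hg u).continuousAt
  exact ((integrable_min_one_abs_oneSidedStable hα hα1).const_mul _).mono'
    (hcont.sub continuous_const).aestronglyMeasurable
    (.of_forall (norm_sub_le_mul_min_one_abs hg hC hg'))

theorem tendsto_mul_rpow_neg_of_norm_le {h : ℝ → ℂ} {K : ℝ} (hα : 0 < α) (hα1 : α < 1)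
    (hK : ∀ u, ‖h u‖ ≤ K * min 1 |u|) :
    Tendsto (fun u => h u * ((u ^ (-α) : ℝ) : ℂ)) (𝓝[>] 0) (𝓝 0) ∧
      Tendsto (fun u => h u * ((u ^ (-α) : ℝ) : ℂ)) atTop (𝓝 0) := by
  have hK0 : 0 ≤ K := by simpa using (norm_nonneg _).trans (hK 1)
  have hbound : ∀ {u}, 0 < u → ‖h u * ((u ^ (-α) : ℝ) : ℂ)‖ ≤ K * min 1 u * u ^ (-α) := by
    intro u hu
    have hpow := Real.rpow_nonneg hu.le (-α)
    rw [norm_mul, Complex.norm_real, Real.norm_of_nonneg hpow]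
    gcongr
    simpa only [abs_of_pos hu] using hK u
  constructor
  · have hlim : Tendsto (fun u : ℝ => K * u ^ (1 - α)) (𝓝[>] 0) (𝓝 0) := by
      have := ((Real.continuousAt_rpow_const 0 (1 - α) (.inr (by linarith))).tendsto.const_mul
        K).mono_left (nhdsWithin_le_nhds (s := Ioi 0))
      rwa [Real.zero_rpow (by linarith), mul_zero] at this
    refine squeeze_zero_norm' ?_ hlim
    filter_upwards [self_mem_nhdsWithin] with u (hu : 0 < u)
    rw [sub_eq_add_neg, Real.rpow_one_add' hu.le (by linarith), ← mul_assoc]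
    exact (hbound hu).trans (by gcongr; exact min_le_right 1 u)
  · have hlim := (tendsto_rpow_neg_atTop hα).const_mul K
    rw [mul_zero] at hlim
    refine squeeze_zero_norm' ?_ hlim
    filter_upwards [eventually_gt_atTop 0] with u hu
    refine (hbound hu).trans ?_
    gcongr
    exact mul_le_of_le_one_right hK0 (min_le_left 1 u)

theorem mul_integral_sub_oneSidedStable (hα : 0 < α) (hα1 : α < 1)
    (hg : ∀ u, HasDerivAt g (g' u) u) (hC : ∀ u, ‖g' u‖ ≤ C) (hg' : Integrable g') :
    α * ∫ u, (g u - g 0) ∂oneSidedStable α = ∫ u in Ioi 0, g' u * ((u ^ (-α) : ℝ) : ℂ) := by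
  obtain ⟨hzero, htop⟩ := tendsto_mul_rpow_neg_of_norm_le hα hα1
    (norm_sub_le_mul_min_one_abs hg hC hg')
  have hsub := integrable_oneSidedStable_iff.1 (integrable_sub_oneSidedStable hα hα1 hg hC hg')
  have hderiv : ∀ u : ℝ, (g u - g 0) * ((-α * u ^ (-α - 1) : ℝ) : ℂ) =
      -α * (u ^ (-α - 1) • (g u - g 0)) := fun u => by
    rw [Complex.real_smul]
    push_cast
    ring
  have hparts := integral_Ioi_mul_deriv_eq_deriv_mul (u := fun u => g u - g 0)
    (v := fun u : ℝ => ((u ^ (-α) : ℝ) : ℂ)) (v' := fun u => ((-α * u ^ (-α - 1) : ℝ) : ℂ))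
    (fun u _ => (hg u).sub_const _)
    (fun u hu => (Real.hasDerivAt_rpow_const (.inl (ne_of_gt hu))).ofReal_comp)
    ((hsub.const_mul (-α : ℂ)).congr (.of_forall fun u => (hderiv u).symm))
    (integrableOn_mul_rpow_neg hα hα1 hC hg') hzero htop
  simp only [hderiv, integral_const_mul, ← integral_oneSidedStable] at hparts
  linear_combination -hparts

end IntegrationByParts

theorem mul_integral_add_sub_nuStable (hα : 0 < α) (hα1 : α < 1) (hm₁ : 0 ≤ m₁) (hm₂ : 0 ≤ m₂)
    {f f' : ℝ → ℂ} {C : ℝ} (hf : ∀ y, HasDerivAt f (f' y) y) (hC : ∀ y, ‖f' y‖ ≤ C)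
    (hf' : Integrable f') (x : ℝ) :
    α * ∫ u, (f (x + u) - f x) ∂nuStable α m₁ m₂ =
      m₁ * (∫ u in Ioi 0, f' (x + u) * ((u ^ (-α) : ℝ) : ℂ)) -
        m₂ * ∫ u in Ioi 0, f' (x - u) * ((u ^ (-α) : ℝ) : ℂ) := by
  have hpos : ∀ u, HasDerivAt (fun u => f (x + u)) (f' (x + u)) u :=
    fun u => (hf (x + u)).comp_const_add x u
  have hneg : ∀ u, HasDerivAt (fun u => f (x - u)) (-f' (x - u)) u :=
    fun u => (hf (x - u)).comp_const_sub x u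
  have hneg_le : ∀ u, ‖-f' (x - u)‖ ≤ C := fun u => (norm_neg _).trans_le (hC _)
  have hpos_int : Integrable fun u => f' (x + u) := hf'.comp_add_left x
  have hneg_int : Integrable fun u => -f' (x - u) := (hf'.comp_sub_left x).neg
  have hsub_pos := integrable_sub_oneSidedStable hα hα1 hpos (fun u => hC _) hpos_int
  have hsub_neg := integrable_sub_oneSidedStable hα hα1 hneg hneg_le hneg_int
  have hparts_pos := mul_integral_sub_oneSidedStable hα hα1 hpos (fun u => hC _) hpos_int
  have hparts_neg := mul_integral_sub_oneSidedStable hα hα1 hneg hneg_le hneg_int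
  simp only [add_zero, sub_zero, neg_mul, integral_neg] at hsub_pos hsub_neg hparts_pos hparts_neg
  rw [integral_nuStable hm₁ hm₂ hsub_pos hsub_neg]
  simp only [← sub_eq_add_neg]
  linear_combination (m₁ : ℂ) * hparts_pos + (m₂ : ℂ) * hparts_neg

end Stable

/-- The exponent `iξ(e^{-t}x + (1 - e^{-t})γ) + (1 - e^{-αt})L(ξ)` of the Mehler kernel
`e^{iξxe^{-t}} ψ(ξ)/ψ(e^{-t}ξ)` when `ψ(ξ) = e^{iξγ + L(ξ)}` and `L` is homogeneous of degree `α`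
under positive dilations. -/
noncomputable def mehlerExponent (α γ x : ℝ) (L : ℝ → ℂ) (t ξ : ℝ) : ℂ :=
  Complex.I * ξ * ((Real.exp (-t) * x + (1 - Real.exp (-t)) * γ : ℝ) : ℂ) +
    ((1 - Real.exp (-(α * t)) : ℝ) : ℂ) * L ξ

section Mehler

variable {α : ℝ} {L : ℝ → ℂ}

theorem mehlerExponent_zero (α γ x : ℝ) (L : ℝ → ℂ) (ξ : ℝ) :
    mehlerExponent α γ x L 0 ξ = Complex.I * ξ * x := by
  simp [mehlerExponent]

theorem measurable_mehlerExponent (hL : Measurable L) (α γ x t : ℝ) :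
    Measurable (mehlerExponent α γ x L t) := by
  unfold mehlerExponent
  fun_prop

theorem mehlerExponent_re_nonpos (hα : 0 ≤ α) (hL : ∀ ξ, (L ξ).re ≤ 0) (γ x : ℝ) {t : ℝ}
    (ht : 0 ≤ t) (ξ : ℝ) : (mehlerExponent α γ x L t ξ).re ≤ 0 := by
  have hexp : 0 ≤ 1 - Real.exp (-(α * t)) :=
    sub_nonneg.2 (Real.exp_le_one_iff.2 (neg_nonpos.2 (mul_nonneg hα ht)))
  rw [mehlerExponent, mul_assoc, ← Complex.ofReal_mul, Complex.add_re, Complex.I_mul_re,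
    Complex.ofReal_im, neg_zero, zero_add, Complex.re_ofReal_mul]
  exact mul_nonpos_of_nonneg_of_nonpos hexp (hL ξ)

theorem norm_mehlerExponent_sub_le (hα : 0 ≤ α) (γ x : ℝ) {t : ℝ} (ht : 0 ≤ t) (ξ : ℝ) :
    ‖mehlerExponent α γ x L t ξ - mehlerExponent α γ x L 0 ξ‖ ≤
      t * (|ξ| * |γ - x| + α * ‖L ξ‖) := by
  have hexp : ∀ s : ℝ, 0 ≤ s → |1 - Real.exp (-s)| ≤ s := fun s hs => by
    rw [abs_of_nonneg (sub_nonneg.2 (Real.exp_le_one_iff.2 (neg_nonpos.2 hs)))]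
    linarith [Real.add_one_le_exp (-s)]
  have hdiff : mehlerExponent α γ x L t ξ - mehlerExponent α γ x L 0 ξ =
      Complex.I * ξ * ((1 - Real.exp (-t) : ℝ) : ℂ) * ((γ - x : ℝ) : ℂ) +
        ((1 - Real.exp (-(α * t)) : ℝ) : ℂ) * L ξ := by
    rw [mehlerExponent_zero, mehlerExponent]
    push_cast
    ring
  calc ‖mehlerExponent α γ x L t ξ - mehlerExponent α γ x L 0 ξ‖
      ≤ |ξ| * |1 - Real.exp (-t)| * |γ - x| + |1 - Real.exp (-(α * t))| * ‖L ξ‖ := by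
        rw [hdiff]
        refine (norm_add_le _ _).trans_eq ?_
        simp only [norm_mul, Complex.norm_I, one_mul, Complex.norm_real, Real.norm_eq_abs]
    _ ≤ |ξ| * t * |γ - x| + α * t * ‖L ξ‖ := by
        gcongr
        exacts [hexp t ht, hexp _ (mul_nonneg hα ht)]
    _ = t * (|ξ| * |γ - x| + α * ‖L ξ‖) := by ring

theorem hasDerivAt_mehlerExponent_zero (α γ x : ℝ) (L : ℝ → ℂ) (ξ : ℝ) :
    HasDerivAt (fun t => mehlerExponent α γ x L t ξ)
      (Complex.I * ξ * ((γ - x : ℝ) : ℂ) + α * L ξ) 0 := by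
  have hexp : ∀ a : ℝ, HasDerivAt (fun t => Real.exp (-(a * t))) (-a) 0 := fun a => by
    simpa using (((hasDerivAt_id (0 : ℝ)).const_mul a).neg).exp
  have h1 := hexp 1
  simp only [one_mul] at h1
  refine ((((h1.mul_const x).add ((h1.const_sub 1).mul_const γ)).ofReal_comp.const_mul
    (Complex.I * ξ)).add (((hexp α).const_sub 1).ofReal_comp.mul_const (L ξ))).congr_deriv ?_
  push_cast
  ring

end Mehler

theorem hasDerivWithinAt_integral_cexp_mehlerExponent {α : ℝ} (hα : 0 ≤ α) {ν : Measure ℝ}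
    [SFinite ν] (hν : Integrable (fun u => min 1 |u|) ν) {f : ℝ → ℂ} (hf : Continuous f)
    (hfi : Integrable f) (hF : Integrable (fourierT f))
    (hF' : Integrable fun ξ : ℝ => ξ * fourierT f ξ) (γ x : ℝ) :
    HasDerivWithinAt
      (fun t => ((1 / (2 * Real.pi) : ℝ) : ℂ) *
        ∫ ξ, fourierT f ξ * Complex.exp (mehlerExponent α γ x (levyExponent ν) t ξ))
      (((γ - x : ℝ) : ℂ) * deriv f x + α * ∫ u, (f (x + u) - f x) ∂ν) (Ioi 0) 0 := by
  have hIF : Integrable fun ξ : ℝ => Complex.I * ξ * fourierT f ξ := by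
    simpa only [mul_assoc] using hF'.const_mul Complex.I
  have hFL := integrable_mul_levyExponent hν hF hF'
  have hbound : ∀ ξ, |ξ| * |γ - x| + α * ‖levyExponent ν ξ‖ ≤
      (|γ - x| + α * ∫ u, min 1 |u| ∂ν) * (2 + |ξ|) := fun ξ => by
    have := mul_le_mul_of_nonneg_left (norm_levyExponent_le hν ξ) hα
    linarith [abs_nonneg (γ - x)]
  have hderiv := (hasDerivWithinAt_integral_mul_cexp hF
    (B := fun ξ => (|γ - x| + α * ∫ u, min 1 |u| ∂ν) * (2 + |ξ|))
    (by simpa only [mul_assoc] using (integrable_two_add_abs_mul_norm hF hF').const_mul _)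
    (fun t _ => (measurable_mehlerExponent measurable_levyExponent α γ x t).aestronglyMeasurable)
    (fun t ht => mehlerExponent_re_nonpos hα (levyExponent_re_nonpos hν) γ x ht)
    (fun t ht ξ => (norm_mehlerExponent_sub_le hα γ x ht ξ).trans
      (mul_le_mul_of_nonneg_left (hbound ξ) ht))
    (fun ξ => (hasDerivAt_mehlerExponent_zero α γ x _ ξ).hasDerivWithinAt)).const_mul
      ((1 / (2 * Real.pi) : ℝ) : ℂ)
  refine hderiv.congr_deriv ?_
  have hderiv_f : deriv f x = invFourierT (fun ξ => Complex.I * ξ * fourierT f ξ) x := by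
    simpa only [invFourierT_fourierT hf hfi hF] using (hasDerivAt_invFourierT hF hF' x).deriv
  have hjump : ∫ u, (f (x + u) - f x) ∂ν =
      invFourierT (fun ξ => fourierT f ξ * levyExponent ν ξ) x := by
    rw [invFourierT_mul_levyExponent hν hF hF', invFourierT_fourierT hf hfi hF]
  rw [hderiv_f, hjump, ← invFourierT_const_mul, ← invFourierT_const_mul,
    ← invFourierT_add (hIF.const_mul _) (hFL.const_mul _), invFourierT]
  congr with ξ
  rw [mehlerExponent_zero]
  ring

theorem psi01_eq (α m₁ m₂ β ξ : ℝ) : psi01 α m₁ m₂ β ξ =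
    Complex.exp (Complex.I * ξ * Gamma01 α m₁ m₂ β + levyExponent (nuStable α m₁ m₂) ξ) :=
  rfl

section StableSemigroup

variable {α m₁ m₂ : ℝ}

theorem cexp_mul_psi01_div_psi01 (hα : 0 < α) (hα1 : α < 1) (hm₁ : 0 ≤ m₁) (hm₂ : 0 ≤ m₂)
    (β t x ξ : ℝ) :
    Complex.exp (Complex.I * ξ * x * ((Real.exp (-t) : ℝ) : ℂ)) * psi01 α m₁ m₂ β ξ /
        psi01 α m₁ m₂ β (Real.exp (-t) * ξ) =
      Complex.exp
        (mehlerExponent α (Gamma01 α m₁ m₂ β) x (levyExponent (nuStable α m₁ m₂)) t ξ) := by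
  rw [psi01_eq, psi01_eq, levyExponent_nuStable_mul hα hα1 hm₁ hm₂ (Real.exp_pos _),
    ← Real.exp_mul, ← Complex.exp_add, ← Complex.exp_sub, mehlerExponent]
  push_cast
  ring_nf

theorem Pt_eq_integral_cexp_mehlerExponent (hα : 0 < α) (hα1 : α < 1) (hm₁ : 0 ≤ m₁)
    (hm₂ : 0 ≤ m₂) (β t : ℝ) (f : ℝ → ℂ) (x : ℝ) :
    Pt α m₁ m₂ β t f x = ((1 / (2 * Real.pi) : ℝ) : ℂ) * ∫ ξ, fourierT f ξ * Complex.exp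
      (mehlerExponent α (Gamma01 α m₁ m₂ β) x (levyExponent (nuStable α m₁ m₂)) t ξ) := by
  simp only [Pt, mul_assoc (fourierT f _), mul_div_assoc, ← cexp_mul_psi01_div_psi01 hα hα1 hm₁ hm₂]

theorem Pt_zero {f : ℝ → ℂ} (hf : Continuous f) (hfi : Integrable f)
    (hF : Integrable (fourierT f)) (α m₁ m₂ β x : ℝ) : Pt α m₁ m₂ β 0 f x = f x := by
  have hψ : ∀ ξ, psi01 α m₁ m₂ β ξ ≠ 0 := fun ξ => Complex.exp_ne_zero _
  simp only [Pt, neg_zero, Real.exp_zero, Complex.ofReal_one, mul_one, one_mul,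
    mul_div_cancel_right₀ _ (hψ _)]
  exact congrFun (invFourierT_fourierT hf hfi hF) x

theorem tendsto_Pt_sub_div {f : ℝ → ℂ} (hα : 0 < α) (hα1 : α < 1) (hm₁ : 0 ≤ m₁) (hm₂ : 0 ≤ m₂)
    (hf : Continuous f) (hfi : Integrable f) (hF : Integrable (fourierT f))
    (hF' : Integrable fun ξ : ℝ => ξ * fourierT f ξ) (β x : ℝ) :
    Tendsto (fun t : ℝ => (Pt α m₁ m₂ β t f x - f x) / (t : ℂ)) (𝓝[>] 0)
      (𝓝 (((Gamma01 α m₁ m₂ β - x : ℝ) : ℂ) * deriv f x +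
        α * ∫ u, (f (x + u) - f x) ∂nuStable α m₁ m₂)) := by
  have hderiv := hasDerivWithinAt_integral_cexp_mehlerExponent hα.le
    (integrable_min_one_abs_nuStable (m₁ := m₁) (m₂ := m₂) hα hα1) hf hfi hF hF'
    (Gamma01 α m₁ m₂ β) x
  simp only [← Pt_eq_integral_cexp_mehlerExponent hα hα1 hm₁ hm₂] at hderiv
  refine ((hasDerivWithinAt_iff_tendsto_slope' self_notMem_Ioi).1 hderiv).congr fun t => ?_
  rw [slope_def_module, Pt_zero hf hfi hF, sub_zero, Complex.real_smul, Complex.ofReal_inv,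
    div_eq_inv_mul]

end StableSemigroup

theorem stmt_12_general {α m₁ m₂ : ℝ} (β : ℝ) (hα : 0 < α) (hα1 : α < 1)
    (hm₁ : 0 ≤ m₁) (hm₂ : 0 ≤ m₂) {f : ℝ → ℂ} (hf : Continuous f) (hfi : Integrable f)
    (hF' : Integrable fun ξ : ℝ => ξ * fourierT f ξ) (hf' : Integrable (deriv f)) (x : ℝ) :
    IntegrableOn (fun u : ℝ => deriv f (x + u) * ((u ^ (-α) : ℝ) : ℂ)) (Ioi 0) ∧
    IntegrableOn (fun u : ℝ => deriv f (x - u) * ((u ^ (-α) : ℝ) : ℂ)) (Ioi 0) ∧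
    Tendsto (fun t : ℝ => (Pt α m₁ m₂ β t f x - f x) / (t : ℂ)) (𝓝[>] 0)
      (𝓝 (-(x : ℂ) * deriv f x + ((Gamma01 α m₁ m₂ β : ℝ) : ℂ) * deriv f x +
        (m₁ : ℂ) * (∫ u in Ioi (0 : ℝ), deriv f (x + u) * ((u ^ (-α) : ℝ) : ℂ)) -
        (m₂ : ℂ) * ∫ u in Ioi (0 : ℝ), deriv f (x - u) * ((u ^ (-α) : ℝ) : ℂ))) := by
  have hF := integrable_of_integrable_mul (continuous_fourierT hfi) hF'
  have hderiv : ∀ y, HasDerivAt f (invFourierT (fun ξ => Complex.I * ξ * fourierT f ξ) y) y := by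
    simpa only [invFourierT_fourierT hf hfi hF] using hasDerivAt_invFourierT hF hF'
  have hC : ∀ y, ‖deriv f y‖ ≤ 1 / (2 * Real.pi) * ∫ ξ : ℝ, ‖Complex.I * ξ * fourierT f ξ‖ :=
    fun y => (hderiv y).deriv ▸ norm_invFourierT_le _ y
  refine ⟨integrableOn_mul_rpow_neg hα hα1 (fun u => hC _) (hf'.comp_add_left x),
    integrableOn_mul_rpow_neg hα hα1 (fun u => hC _) (hf'.comp_sub_left x), ?_⟩
  convert tendsto_Pt_sub_div hα hα1 hm₁ hm₂ hf hfi hF hF' β x using 2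
  rw [mul_integral_add_sub_nuStable hα hα1 hm₁ hm₂
    (fun y => (hderiv y).differentiableAt.hasDerivAt) hC hf']
  push_cast
  ring

section Schwartz

open scoped FourierTransform

variable (f : SchwartzMap ℝ ℂ)

theorem fourierT_schwartz :
    fourierT f = fun ξ => (𝓕 f : SchwartzMap ℝ ℂ) (ξ / (2 * Real.pi)) := by
  ext ξ
  rw [fourierT_eq_fourier, SchwartzMap.fourier_coe]

theorem integrable_mul_fourierT_schwartz : Integrable fun ξ : ℝ => ξ * fourierT f ξ := by
  have hπ : 2 * Real.pi ≠ 0 := by positivity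
  have hmul : Integrable fun v : ℝ => v * (𝓕 f : SchwartzMap ℝ ℂ) v := by
    rw [← integrable_norm_iff (by fun_prop)]
    simpa only [norm_mul, Complex.norm_real, pow_one] using
      (𝓕 f : SchwartzMap ℝ ℂ).integrable_pow_mul volume 1
  refine ((hmul.comp_div hπ).const_mul ((2 * Real.pi : ℝ) : ℂ)).congr (.of_forall fun ξ => ?_)
  simp only [fourierT_schwartz]
  rw [← mul_assoc, ← Complex.ofReal_mul, mul_div_cancel₀ _ hπ]

theorem integrable_deriv_schwartz : Integrable (deriv f) :=
  (SchwartzMap.derivCLM ℂ ℂ f).integrable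

end Schwartz

theorem stmt_12 (α m₁ m₂ β : ℝ) (hα : 0 < α) (hα1 : α < 1)
    (hm₁ : 0 ≤ m₁) (hm₂ : 0 ≤ m₂) (hm : 0 < m₁ + m₂)
    (f : SchwartzMap ℝ ℂ) (x : ℝ) :
    IntegrableOn (fun u : ℝ => deriv (⇑f) (x + u) * ((u ^ (-α) : ℝ) : ℂ)) (Set.Ioi 0) ∧
    IntegrableOn (fun u : ℝ => deriv (⇑f) (x - u) * ((u ^ (-α) : ℝ) : ℂ)) (Set.Ioi 0) ∧
    Filter.Tendsto (fun t : ℝ => (Pt α m₁ m₂ β t (⇑f) x - f x) / (t : ℂ))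
      (nhdsWithin 0 (Set.Ioi 0))
      (nhds (-(x : ℂ) * deriv (⇑f) x + ((Gamma01 α m₁ m₂ β : ℝ) : ℂ) * deriv (⇑f) x +
        (m₁ : ℂ) * (∫ u in Set.Ioi (0 : ℝ), deriv (⇑f) (x + u) * ((u ^ (-α) : ℝ) : ℂ)) -
        (m₂ : ℂ) * ∫ u in Set.Ioi (0 : ℝ), deriv (⇑f) (x - u) * ((u ^ (-α) : ℝ) : ℂ))) :=
  stmt_12_general β hα hα1 hm₁ hm₂ f.continuous f.integrable
    (integrable_mul_fourierT_schwartz f) (integrable_deriv_schwartz f) x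
end

section
/- (Gradient bound for the Stein solution, α ∈ (0,1).) Let α ∈ (0,1), m₁, m₂ ∈ [0,∞) with m₁ + m₂ > 0, β ∈ ℝ. Let μ be a Borel probability measure on ℝ with characteristic function ψ_α, and for each t > 0 let μ_t be a Borel probability measure on ℝ with characteristic function ξ ↦ ψ_α(ξ)/ψ_α(e^{-t}ξ). Let h : ℝ → ℝ be differentiable with ‖h'‖_∞ := sup_x |h'(x)| < ∞ and satisfying |h(x) - h(y)| ≤ min(|x-y|, |x-y|^δ) for all x, y and some δ ∈ (0,α). Assume h is μ-integrable and that for every x ∈ ℝ the function t ↦ ∫_ℝ h(y + e^{-t}x) dμ_t(y) - ∫_ℝ h dμ is Lebesgue integrable on (0,∞), and set f_h(x) = -∫₀^∞ (∫_ℝ h(y + e^{-t}x) dμ_t(y) - ∫_ℝ h dμ) dt. Then f_h is differentiable on ℝ and sup_x |f_h'(x)| ≤ ‖h'‖_∞. -/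
open MeasureTheory

/-!
Put `P_t h(x) = ∫ h(y + e^{-t} x) dμ_t(y)`. Differentiating under the integral gives
`|(P_t h)'| ≤ e^{-t} ‖h'‖_∞`, and `∫₀^∞ e^{-t} dt = 1`, so differentiating under the `dt`-integral
as well yields `|f_h'| ≤ ‖h'‖_∞`. This requires `h` to be `μ_t`-integrable, which comes from
self-decomposability: the quotient of characteristic functions says that `μ` is the convolution of
`μ_t` with the image of `μ` under `x ↦ e^{-t} x`. So by Fubini some translate of `h` is
`μ_t`-integrable, and then so is the Lipschitz function `h`, which differs from it by a bounded
function.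
-/

open scoped NNReal Topology

section ParametricIntegral

variable {Ω 𝕜 E : Type*} [MeasurableSpace Ω] {μ : Measure Ω} [RCLike 𝕜]
  [NormedAddCommGroup E] [NormedSpace 𝕜 E] {F : 𝕜 → Ω → E} {bound : Ω → ℝ} {x : 𝕜}

theorem aestronglyMeasurable_deriv_param (hF : ∀ z, AEStronglyMeasurable (F z) μ)
    (hdiff : ∀ᵐ ω ∂μ, DifferentiableAt 𝕜 (F · ω) x) :
    AEStronglyMeasurable (fun ω ↦ deriv (F · ω) x) μ := by
  refine aestronglyMeasurable_of_tendsto_ae (𝓝[≠] (0 : 𝕜))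
    (fun s ↦ ((hF (x + s)).sub (hF x)).const_smul s⁻¹) ?_
  filter_upwards [hdiff] with ω hω
  exact hω.hasDerivAt.tendsto_slope_zero

variable [NormedSpace ℝ E]

theorem hasDerivAt_integral_of_norm_deriv_le (hF : ∀ z, Integrable (F z) μ)
    (hdiff : ∀ᵐ ω ∂μ, Differentiable 𝕜 (F · ω)) (hbound : Integrable bound μ)
    (hle : ∀ᵐ ω ∂μ, ∀ z, ‖deriv (F · ω) z‖ ≤ bound ω) (x : 𝕜) :
    HasDerivAt (fun z ↦ ∫ ω, F z ω ∂μ) (∫ ω, deriv (F · ω) x ∂μ) x := by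
  have hmeas : AEStronglyMeasurable (fun ω ↦ deriv (F · ω) x) μ :=
    aestronglyMeasurable_deriv_param (fun z ↦ (hF z).aestronglyMeasurable)
      (hdiff.mono fun _ hω ↦ hω x)
  exact (hasDerivAt_integral_of_dominated_loc_of_deriv_le (F' := fun z ω ↦ deriv (F · ω) z)
    Filter.univ_mem (.of_forall fun z ↦ (hF z).aestronglyMeasurable) (hF x) hmeas
    (hle.mono fun _ hω z _ ↦ hω z) hbound
    (hdiff.mono fun _ hω z _ ↦ (hω z).hasDerivAt)).2

theorem norm_deriv_integral_le (hF : ∀ z, Integrable (F z) μ)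
    (hdiff : ∀ᵐ ω ∂μ, Differentiable 𝕜 (F · ω)) (hbound : Integrable bound μ)
    (hle : ∀ᵐ ω ∂μ, ∀ z, ‖deriv (F · ω) z‖ ≤ bound ω) (x : 𝕜) :
    ‖deriv (fun z ↦ ∫ ω, F z ω ∂μ) x‖ ≤ ∫ ω, bound ω ∂μ := by
  rw [(hasDerivAt_integral_of_norm_deriv_le hF hdiff hbound hle x).deriv]
  exact norm_integral_le_of_norm_le hbound (hle.mono fun _ hω ↦ hω x)

end ParametricIntegral

section LipschitzConvolution

variable {V E : Type*} [SeminormedAddCommGroup V] [MeasurableSpace V] [BorelSpace V]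
  [SecondCountableTopology V] [NormedAddCommGroup E] {ν ρ : Measure V} [IsFiniteMeasure ρ]
  {h : V → E} {K : ℝ≥0}

theorem integrable_comp_add_of_lipschitzWith (hh : LipschitzWith K h) {a : V}
    (ha : Integrable (fun y ↦ h (y + a)) ρ) (b : V) : Integrable (fun y ↦ h (y + b)) ρ := by
  have hmeas (c : V) : AEStronglyMeasurable (fun y ↦ h (y + c)) ρ :=
    (hh.continuous.comp (continuous_add_const c)).aestronglyMeasurable
  have hsub : Integrable (fun y ↦ h (y + b) - h (y + a)) ρ :=
    .of_bound ((hmeas b).sub (hmeas a)) (K * ‖b - a‖) <| ae_of_all _ fun y ↦ by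
      simpa using hh.norm_sub_le (y + b) (y + a)
  simpa only [Pi.add_def, sub_add_cancel] using hsub.add ha

theorem integrable_of_integrable_conv [NeZero ν] (hh : LipschitzWith K h)
    (hint : Integrable h (ν ∗ ρ)) : Integrable h ρ := by
  obtain ⟨a, ha⟩ : ∃ a, Integrable (fun y ↦ h (y + a)) ρ := by
    simpa only [add_comm] using ((integrable_conv_iff hint.aestronglyMeasurable).1 hint).1.exists
  simpa only [add_zero] using integrable_comp_add_of_lipschitzWith hh ha 0

end LipschitzConvolution

section SelfDecomposable

variable {V E : Type*} [NormedAddCommGroup V] [InnerProductSpace ℝ V] [CompleteSpace V]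
  [MeasurableSpace V] [BorelSpace V] [SecondCountableTopology V] [NormedAddCommGroup E]
  {μ ρ : Measure V} [IsFiniteMeasure μ] [IsFiniteMeasure ρ] {a : ℝ}

theorem map_smul_conv_eq_of_charFun_eq_div (hμ : ∀ ξ, charFun μ ξ ≠ 0)
    (hρ : ∀ ξ, charFun ρ ξ = charFun μ ξ / charFun μ (a • ξ)) :
    μ.map (a • ·) ∗ ρ = μ := by
  refine Measure.ext_of_charFun (funext fun ξ ↦ ?_)
  rw [charFun_conv, charFun_map_smul, hρ, mul_div_cancel₀ _ (hμ _)]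

theorem integrable_of_charFun_eq_div (hμ : ∀ ξ, charFun μ ξ ≠ 0)
    (hρ : ∀ ξ, charFun ρ ξ = charFun μ ξ / charFun μ (a • ξ)) {h : V → E} {K : ℝ≥0}
    (hh : LipschitzWith K h) (hint : Integrable h μ) : Integrable h ρ := by
  have hμ_ne : μ ≠ 0 := fun hμ₀ ↦ hμ 0 (by simp [hμ₀])
  have : NeZero (μ.map (a • ·)) := ⟨(Measure.map_ne_zero_iff (by fun_prop)).2 hμ_ne⟩
  rw [← map_smul_conv_eq_of_charFun_eq_div hμ hρ] at hint
  exact integrable_of_integrable_conv hh hint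

end SelfDecomposable

theorem charFun_eq_integral_exp_I_mul (μ : Measure ℝ) (ξ : ℝ) :
    charFun μ ξ = ∫ x : ℝ, Complex.exp (Complex.I * ξ * x) ∂μ := by
  rw [charFun_apply_real]
  congr with x
  ring_nf

theorem psi01_ne_zero (α m₁ m₂ β ξ : ℝ) : psi01 α m₁ m₂ β ξ ≠ 0 :=
  Complex.exp_ne_zero _

theorem integrable_of_integral_exp_eq_psi01_div {E : Type*} [NormedAddCommGroup E] {α m₁ m₂ β t : ℝ}
    {μ ρ : Measure ℝ} [IsFiniteMeasure μ] [IsFiniteMeasure ρ]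
    (hμ : ∀ ξ : ℝ, ∫ x : ℝ, Complex.exp (Complex.I * ξ * x) ∂μ = psi01 α m₁ m₂ β ξ)
    (hρ : ∀ ξ : ℝ, ∫ x : ℝ, Complex.exp (Complex.I * ξ * x) ∂ρ =
      psi01 α m₁ m₂ β ξ / psi01 α m₁ m₂ β (Real.exp (-t) * ξ))
    {h : ℝ → E} {K : ℝ≥0} (hh : LipschitzWith K h) (hint : Integrable h μ) :
    Integrable h ρ := by
  simp only [← charFun_eq_integral_exp_I_mul] at hμ hρ
  have hμ_ne (ξ : ℝ) : charFun μ ξ ≠ 0 := by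
    rw [hμ]
    exact psi01_ne_zero α m₁ m₂ β ξ
  simp only [← hμ] at hρ
  exact integrable_of_charFun_eq_div hμ_ne hρ hh hint

section Mehler

variable {E : Type*} [NormedAddCommGroup E] [NormedSpace ℝ E] {h : ℝ → E} {K : ℝ≥0}

theorem norm_deriv_comp_add_mul_le (hK : ∀ y, ‖deriv h y‖₊ ≤ K) (a x y : ℝ) :
    ‖deriv (fun z ↦ h (y + a * z)) x‖ ≤ |a| * K := by
  have hderiv : deriv (fun z ↦ h (y + a * z)) x = a • deriv h (y + a * x) := by
    rw [deriv_comp_mul_left a (fun z ↦ h (y + z)), deriv_comp_const_add]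
  rw [hderiv, norm_smul, Real.norm_eq_abs]
  gcongr
  exact hK _

theorem integrable_comp_add_of_nnnorm_deriv_le {ν : Measure ℝ} [IsFiniteMeasure ν]
    (hdiff : Differentiable ℝ h) (hK : ∀ y, ‖deriv h y‖₊ ≤ K) (hint : Integrable h ν) (b : ℝ) :
    Integrable (fun y ↦ h (y + b)) ν :=
  integrable_comp_add_of_lipschitzWith (lipschitzWith_of_nnnorm_deriv_le hdiff hK)
    (by simpa only [add_zero] using hint : Integrable (fun y ↦ h (y + 0)) ν) b

/-- The generalized Mehler (Ornstein–Uhlenbeck type) operator `P_t h(x) = ∫ h(y + e^{-t} x) dρ_t(y)`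
attached to a family of measures `ρ`. -/
noncomputable def mehler (ρ : ℝ → Measure ℝ) (h : ℝ → E) (t x : ℝ) : E :=
  ∫ y, h (y + Real.exp (-t) * x) ∂(ρ t)

/-- The Stein solution `f_h(x) = -∫₀^∞ (P_t h(x) - c) dt`. The centring constant `c` is the mean of
`h` under the stationary law in the application to Stein's equation. -/
noncomputable def steinSolution (ρ : ℝ → Measure ℝ) (c : E) (h : ℝ → E) (x : ℝ) : E :=
  -∫ t in Set.Ioi (0 : ℝ), (mehler ρ h t x - c)

variable {ρ : ℝ → Measure ℝ} {t : ℝ}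

theorem differentiable_mehler [IsFiniteMeasure (ρ t)] (hdiff : Differentiable ℝ h)
    (hK : ∀ y, ‖deriv h y‖₊ ≤ K) (hint : Integrable h (ρ t)) :
    Differentiable ℝ (mehler ρ h t) := fun x ↦
  (hasDerivAt_integral_of_norm_deriv_le
    (fun _ ↦ integrable_comp_add_of_nnnorm_deriv_le hdiff hK hint _)
    (ae_of_all _ fun _ ↦ by fun_prop) (integrable_const _)
    (ae_of_all _ fun y z ↦ norm_deriv_comp_add_mul_le hK _ z y) x).differentiableAt

theorem norm_deriv_mehler_le [IsProbabilityMeasure (ρ t)] (hdiff : Differentiable ℝ h)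
    (hK : ∀ y, ‖deriv h y‖₊ ≤ K) (hint : Integrable h (ρ t)) (x : ℝ) :
    ‖deriv (mehler ρ h t) x‖ ≤ Real.exp (-t) * K := by
  have hle := norm_deriv_integral_le
    (fun _ ↦ integrable_comp_add_of_nnnorm_deriv_le hdiff hK hint _)
    (ae_of_all _ fun _ ↦ by fun_prop) (integrable_const _)
    (ae_of_all _ fun y z ↦ norm_deriv_comp_add_mul_le hK (Real.exp (-t)) z y) x
  simpa only [mehler, integral_const, probReal_univ, one_smul, Real.abs_exp] using! hle

theorem stmt_14_general [CompleteSpace E] {c : E}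
    (hρ : ∀ t, 0 < t → IsProbabilityMeasure (ρ t))
    (hdiff : Differentiable ℝ h) (hbdd : BddAbove (Set.range fun y ↦ ‖deriv h y‖))
    (hint : ∀ t, 0 < t → Integrable h (ρ t))
    (hint_mehler : ∀ x, IntegrableOn (fun t ↦ mehler ρ h t x - c) (Set.Ioi 0)) :
    Differentiable ℝ (steinSolution ρ c h) ∧
      ∀ x, ‖deriv (steinSolution ρ c h) x‖ ≤ ⨆ y, ‖deriv h y‖ := by
  let K : ℝ≥0 := ⟨⨆ y, ‖deriv h y‖, Real.iSup_nonneg fun _ ↦ norm_nonneg _⟩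
  have hK : ∀ y, ‖deriv h y‖₊ ≤ K := le_ciSup hbdd
  have hmehler_diff : ∀ᵐ t ∂volume.restrict (Set.Ioi 0),
      Differentiable ℝ fun x ↦ mehler ρ h t x - c := by
    filter_upwards [ae_restrict_mem measurableSet_Ioi] with t ht
    have := hρ t ht
    exact (differentiable_mehler hdiff hK (hint t ht)).sub_const c
  have hmehler_le : ∀ᵐ t ∂volume.restrict (Set.Ioi 0), ∀ x,
      ‖deriv (fun x ↦ mehler ρ h t x - c) x‖ ≤ Real.exp (-t) * K := by
    filter_upwards [ae_restrict_mem measurableSet_Ioi] with t ht x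
    have := hρ t ht
    simpa only [deriv_sub_const] using! norm_deriv_mehler_le hdiff hK (hint t ht) x
  have hbound : IntegrableOn (fun t ↦ Real.exp (-t) * K) (Set.Ioi 0) :=
    (integrableOn_exp_neg_Ioi 0).mul_const _
  refine ⟨fun x ↦ (hasDerivAt_integral_of_norm_deriv_le hint_mehler hmehler_diff hbound hmehler_le
    x).differentiableAt.neg, fun x ↦ ?_⟩
  calc ‖deriv (steinSolution ρ c h) x‖
      = ‖deriv (fun x ↦ ∫ t in Set.Ioi 0, (mehler ρ h t x - c)) x‖ := by
        unfold steinSolution; rw [deriv.fun_neg, norm_neg]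
    _ ≤ ∫ t in Set.Ioi 0, Real.exp (-t) * K :=
        norm_deriv_integral_le hint_mehler hmehler_diff hbound hmehler_le x
    _ = ⨆ y, ‖deriv h y‖ := by
        rw [integral_mul_const, integral_exp_neg_Ioi_zero, one_mul]
        rfl

end Mehler

theorem stmt_14 (α m₁ m₂ β δ : ℝ) (hα : 0 < α) (hα1 : α < 1)
    (hm₁ : 0 ≤ m₁) (hm₂ : 0 ≤ m₂) (hm : 0 < m₁ + m₂)
    (hδ : 0 < δ) (hδα : δ < α)
    (μ : Measure ℝ) [IsProbabilityMeasure μ]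
    (hμ : ∀ t : ℝ, ∫ x : ℝ, Complex.exp (Complex.I * t * x) ∂μ = psi01 α m₁ m₂ β t)
    (μt : ℝ → Measure ℝ) (hP : ∀ t : ℝ, 0 < t → IsProbabilityMeasure (μt t))
    (hμt : ∀ t : ℝ, 0 < t → ∀ ξ : ℝ,
      ∫ x : ℝ, Complex.exp (Complex.I * ξ * x) ∂(μt t) =
        psi01 α m₁ m₂ β ξ / psi01 α m₁ m₂ β (Real.exp (-t) * ξ))
    (h : ℝ → ℝ) (hdiff : Differentiable ℝ h)
    (hbdd : BddAbove (Set.range fun x => |deriv h x|))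
    (hLip : ∀ x y : ℝ, |h x - h y| ≤ min |x - y| (|x - y| ^ δ))
    (hint : Integrable h μ)
    (hint2 : ∀ x : ℝ, IntegrableOn
      (fun t : ℝ => (∫ y : ℝ, h (y + Real.exp (-t) * x) ∂(μt t)) - ∫ y : ℝ, h y ∂μ)
      (Set.Ioi 0)) :
    Differentiable ℝ (fun x : ℝ => -∫ t in Set.Ioi (0 : ℝ),
        ((∫ y : ℝ, h (y + Real.exp (-t) * x) ∂(μt t)) - ∫ y : ℝ, h y ∂μ)) ∧
    ∀ x : ℝ, |deriv (fun x : ℝ => -∫ t in Set.Ioi (0 : ℝ),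
        ((∫ y : ℝ, h (y + Real.exp (-t) * x) ∂(μt t)) - ∫ y : ℝ, h y ∂μ)) x| ≤
      ⨆ y : ℝ, |deriv h y| := by
  have hLip₁ : LipschitzWith 1 h := LipschitzWith.of_dist_le_mul fun x y ↦ by
    simpa only [NNReal.coe_one, one_mul] using! (hLip x y).trans (min_le_left _ _)
  exact stmt_14_general hP hdiff hbdd
    (fun t ht ↦
      have := hP t ht
      integrable_of_integral_exp_eq_psi01_div hμ (hμt t ht) hLip₁ hint) hint2
end
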